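/- A permutation π of a finite type α is a square in the symmetric group (i.e. there exists σ : Equiv.Perm α with σ^2 = π) if and only if, for every even natural number l, the multiplicity of l in Equiv.Perm.cycleType π is even. -/

import Mathlib

/-- The cycle type of the square of an `n`-cycle. -/
def sqType (n : ℕ) : Multiset ℕ :=
  if Odd n then {n} else if n = 2 then 0 else Multiset.replicate 2 (n / 2)

theorem cycleType_sq_of_isCycle {α : Type*} [Fintype α] [DecidableEq α]
    (c : Equiv.Perm α) (hc : c.IsCycle) :
    (c ^ 2).cycleType = sqType c.support.card := by
  unfold sqType
  have ho := hc.orderOf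
  split_ifs with h h2
  · have hcop : Nat.Coprime 2 (orderOf c) := by
      rw [ho]; exact (Nat.coprime_two_left).2 h
    have hc2 : (c ^ 2).IsCycle := hc.pow_iff.2 hcop
    rw [hc2.cycleType, Equiv.Perm.support_pow_coprime hcop]
  · rw [Equiv.Perm.cycleType_eq_zero]
    rw [← h2, ← ho, pow_orderOf_eq_one]
  · have h2le := hc.two_le_card_support
    obtain ⟨m, hm⟩ := Nat.not_odd_iff_even.1 h
    have hm2 : c.support.card = 2 * m := by omega
    have hm1 : 2 ≤ m := by omega
    have hdiv : c.support.card / 2 = m := by omega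
    rw [hdiv]
    have hsupp : (c ^ 2).support = c.support := by
      apply hc.support_pow_of_pos_of_lt_orderOf (by omega)
      omega
    have hall : ∀ l ∈ (c ^ 2).cycleType, l = m := by
      intro l hl
      have hd : l ∣ m := by
        refine (Equiv.Perm.dvd_of_mem_cycleType hl).trans ?_
        apply orderOf_dvd_of_pow_eq_one
        rw [← pow_mul, ← hm2, ← ho, pow_orderOf_eq_one]
      have hd2 : 2 * m ∣ 2 * l := by
        rw [Equiv.Perm.cycleType_def, Multiset.mem_map] at hl
        obtain ⟨f, hf, rfl⟩ := hl
        have hf' : f ∈ (c ^ 2).cycleFactorsFinset := hf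
        obtain ⟨hfc, hfe⟩ := Equiv.Perm.mem_cycleFactorsFinset_iff.1 hf'
        obtain ⟨x, hx⟩ := Finset.card_pos.1 (show 0 < f.support.card by
          have := hfc.two_le_card_support; omega)
        have hxc : x ∈ c.support := by
          rw [← hsupp]; exact Equiv.Perm.mem_cycleFactorsFinset_support_le hf' hx
        have hfx : f = (c ^ 2).cycleOf x := Equiv.Perm.cycle_is_cycleOf hx hf'
        rw [← hm2, ← ho]
        apply orderOf_dvd_of_pow_eq_one
        rw [hc.pow_eq_one_iff' (Equiv.Perm.mem_support.1 hxc), pow_mul,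
          ← Equiv.Perm.cycleOf_pow_apply_self, ← hfx]
        simp only [Function.comp, ← hfc.orderOf, pow_orderOf_eq_one, Equiv.Perm.one_apply]
      exact Nat.dvd_antisymm hd (Nat.dvd_of_mul_dvd_mul_left (by omega) hd2)
    rw [Multiset.eq_replicate]
    refine ⟨?_, hall⟩
    have hr := Multiset.eq_replicate_of_mem hall
    have hs := Equiv.Perm.sum_cycleType (c ^ 2)
    rw [hr, Multiset.sum_replicate, hsupp, hm2, smul_eq_mul] at hs
    exact Nat.eq_of_mul_eq_mul_right (by omega) hs

theorem cycleType_sq {α : Type*} [Fintype α] [DecidableEq α] (σ : Equiv.Perm α) :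
    (σ ^ 2).cycleType = σ.cycleType.bind sqType := by
  induction σ using Equiv.Perm.cycle_induction_on with
  | base_one => simp
  | base_cycles c hc => rw [cycleType_sq_of_isCycle c hc, hc.cycleType, Multiset.singleton_bind]
  | induction_disjoint σ τ hd _ h1 h2 =>
    rw [hd.commute.mul_pow, (hd.pow_disjoint_pow 2 2).cycleType_mul, hd.cycleType_mul,
      Multiset.add_bind, h1, h2]

theorem even_count_bind_sqType (l : ℕ) (hl : Even l) (M : Multiset ℕ) :
    Even (Multiset.count l (M.bind sqType)) := by
  induction M using Multiset.induction_on with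
  | empty => simp
  | cons n M ih =>
    rw [Multiset.cons_bind, Multiset.count_add]
    refine Even.add ?_ ih
    unfold sqType
    split_ifs with h h2
    · have : l ≠ n := by rintro rfl; exact (Nat.not_odd_iff_even.2 hl) h
      simp [this]
    · simp
    · rw [Multiset.count_replicate]; split_ifs <;> simp

theorem exists_half (E : Multiset ℕ) (h : ∀ l, Even (E.count l)) : ∃ D, E = D + D := by
  refine ⟨∑ a ∈ E.toFinset, (E.count a / 2) • {a}, ?_⟩
  ext l
  have h2 := h l
  rw [Multiset.count_add, Multiset.count_sum']
  simp only [Multiset.count_nsmul, Multiset.count_singleton, mul_ite, mul_one, mul_zero,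
    Finset.sum_ite_eq, Multiset.mem_toFinset]
  split_ifs with hm
  · obtain ⟨k, hk⟩ := h2; omega
  · simpa using hm

theorem square_criterion_in_symmetric_group {α : Type*} [Fintype α] [DecidableEq α]
    (π : Equiv.Perm α) :
    (∃ σ : Equiv.Perm α, σ ^ 2 = π) ↔
      ∀ l : ℕ, Even l → Even (Multiset.count l (Equiv.Perm.cycleType π)) := by
  constructor
  · rintro ⟨σ, rfl⟩ l hl
    rw [cycleType_sq]
    exact even_count_bind_sqType l hl _
  · intro h
    have hsplit := Multiset.filter_add_not (fun n => Odd n) π.cycleType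
    obtain ⟨D, hD⟩ := exists_half (π.cycleType.filter (fun n => ¬ Odd n)) (by
      intro l
      rw [Multiset.count_filter]
      split_ifs with hl
      · exact Even.zero
      · exact h l (Nat.not_odd_iff_even.1 hl))
    set O := π.cycleType.filter (fun n => Odd n) with hO
    rw [hD] at hsplit
    have hge : ∀ n ∈ O + (D + D), 2 ≤ n := fun n hn =>
      Equiv.Perm.two_le_of_mem_cycleType (hsplit ▸ hn)
    have hex : ∃ σ : Equiv.Perm α, σ.cycleType = O + D.map (fun n => 2 * n) := by
      rw [Equiv.Perm.exists_with_cycleType_iff]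
      constructor
      · have hs := Equiv.Perm.sum_cycleType_le π
        rw [← hsplit] at hs
        rw [Multiset.sum_add, Multiset.sum_map_mul_left, Multiset.map_id']
        simp only [Multiset.sum_add] at hs
        omega
      · intro a ha
        rcases Multiset.mem_add.1 ha with ha | ha
        · exact hge a (by simp [ha])
        · obtain ⟨b, hb, rfl⟩ := Multiset.mem_map.1 ha
          have := hge b (by simp [hb])
          omega
    obtain ⟨σ, hσ⟩ := hex
    have hOb : O.bind sqType = O := by
      have : O.bind sqType = O.bind (fun n => {n}) := by
        apply Multiset.bind_congr
        intro n hn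
        have : Odd n := (Multiset.mem_filter.1 hn).2
        simp [sqType, this]
      rw [this, Multiset.bind_singleton, Multiset.map_id']
    have hDb : (D.map (fun n => 2 * n)).bind sqType = D + D := by
      rw [Multiset.bind_map]
      have : (D.bind fun n => sqType (2 * n)) = D.bind (fun n => {n} + {n}) := by
        apply Multiset.bind_congr
        intro n hn
        have h2 := hge n (by simp [hn])
        have h3 : ¬ Odd (2 * n) := by simp
        have h4 : 2 * n ≠ 2 := by omega
        have h5 : 2 * n / 2 = n := by omega
        rw [sqType, if_neg h3, if_neg h4, h5]
        rfl
      rw [this, Multiset.bind_add, Multiset.bind_singleton, Multiset.map_id']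
    have hct : (σ ^ 2).cycleType = π.cycleType := by
      rw [cycleType_sq, hσ, Multiset.add_bind, hOb, hDb, hsplit]
    obtain ⟨τ, hτ⟩ := isConj_iff.1 (Equiv.Perm.isConj_of_cycleType_eq hct)
    exact ⟨τ * σ * τ⁻¹, by rw [conj_pow, hτ]⟩
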